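/- Let n ≥ 1, let v ∈ Λ̃ be a primitive element of the Mukai lattice with (v,v) = 2n + 2, let Λ = v^⊥ = {x ∈ Λ̃ : (x,v) = 0} with the restricted bilinear form, and let g : Λ → Λ be an isometry. Let g_ℚ denote the ℚ-linear extension of g to Λ ⊗ ℚ and let Λ^∨ = {x ∈ Λ ⊗ ℚ : (x,y) ∈ ℤ for all y ∈ Λ} be the dual lattice. Then g extends to an isometry g̃ of Λ̃ (meaning g̃(x) = g(x) for all x ∈ Λ) if and only if there exists ε ∈ {1,−1} such that g_ℚ(x) − ε·x ∈ Λ for all x ∈ Λ^∨, i.e. if and only if g acts as +1 or as −1 on the discriminant group Λ^∨/Λ. -/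

import Mathlib

/-!
Put `d = (v, v)` and choose `w` with `(v, w) = 1`, so that the lattice is `Λ ⊕ ℤ w`; then
`w = (d w - v) / d + v / d`, where `(d w - v) / d` lies in the dual lattice of `Λ = v^⊥`.
An isometry extending `g` sends `v` to `ε v` with `ε = ±1`, and by unimodularity every vector of
the dual lattice is an integral vector plus a rational multiple of `v`, so `g` acts on the
discriminant group by `ε`. Conversely, after replacing `g` by `-g` we may take `ε = 1`; the rational
extension of `g` fixing `v` then sends `w` to `g (d w - v) / d + v / d`, which is `w` plus an
element of `Λ`.
-/

/-- The Mukai form of the Mukai lattice `Λ̃ = U^{⊕4}`, as a bilinear form on `ℤ⁸`. -/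
def mukaiForm (x y : Fin 8 → ℤ) : ℤ :=
  x 0 * y 1 + x 1 * y 0 + x 2 * y 3 + x 3 * y 2 + x 4 * y 5 + x 5 * y 4
    + x 6 * y 7 + x 7 * y 6

/-- The Mukai form extended to `ℚ⁸`. -/
def mukaiFormQ (x y : Fin 8 → ℚ) : ℚ :=
  x 0 * y 1 + x 1 * y 0 + x 2 * y 3 + x 3 * y 2 + x 4 * y 5 + x 5 * y 4
    + x 6 * y 7 + x 7 * y 6

/-- An element of `ℤ^m` is primitive if the gcd of its coordinates is `1`. -/
def IsPrimitive {m : ℕ} (x : Fin m → ℤ) : Prop :=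
  Finset.univ.gcd x = 1

/-- The orthogonal complement `v^⊥ = {x ∈ Λ̃ : (x,v) = 0}` as a `ℤ`-submodule. -/
def perpV (v : Fin 8 → ℤ) : Submodule ℤ (Fin 8 → ℤ) where
  carrier := {x | mukaiForm x v = 0}
  add_mem' := by
    intro a b ha hb
    simp only [Set.mem_setOf_eq, mukaiForm, Pi.add_apply] at *
    linear_combination ha + hb
  zero_mem' := by simp [mukaiForm]
  smul_mem' := by
    intro c x hx
    simp only [Set.mem_setOf_eq, mukaiForm, Pi.smul_apply, smul_eq_mul] at *
    linear_combination c * hx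

open LinearMap (BilinForm ker)

section UnimodularLattice

variable {R M : Type*} [CommRing R] [AddCommGroup M] [Module R M] {B : BilinForm R M}

/-- The isometry `g` of the sublattice `Λ` extends to an isometry of the whole lattice. -/
def ExtendsToIsometry (B : BilinForm R M) {Λ : Submodule R M} (g : Λ ≃ₗ[R] Λ) : Prop :=
  ∃ G : M ≃ₗ[R] M, (∀ x y, B (G x) (G y) = B x y) ∧ ∀ x : Λ, G x = g x

/-- The isometry `g` of `Λ` acts as multiplication by `ε` on the discriminant group `Λ^∨/Λ`.
A dual vector is written as a fraction `y / k` with `y ∈ Λ` and `k ∣ (y, x)` for all `x ∈ Λ`, so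
that no extension of scalars is needed. -/
def ActsOnDiscriminantBy (B : BilinForm R M) {Λ : Submodule R M} (g : Λ ≃ₗ[R] Λ) (ε : R) : Prop :=
  ∀ k : R, k ≠ 0 → ∀ y : Λ, (∀ x : Λ, k ∣ B y x) → ∃ z : Λ, g y - ε • y = k • z

theorem ExtendsToIsometry.neg {Λ : Submodule R M} {g : Λ ≃ₗ[R] Λ} (hg : ExtendsToIsometry B g) :
    ExtendsToIsometry B (g ≪≫ₗ LinearEquiv.neg R) := by
  obtain ⟨G, hG, hGg⟩ := hg
  exact ⟨G ≪≫ₗ LinearEquiv.neg R, fun x y => by simp [hG], fun x => by simp [hGg]⟩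

theorem ActsOnDiscriminantBy.neg {Λ : Submodule R M} {g : Λ ≃ₗ[R] Λ} {ε : R}
    (hg : ActsOnDiscriminantBy B g ε) :
    ActsOnDiscriminantBy B (g ≪≫ₗ LinearEquiv.neg R) (-ε) := by
  intro k hk y hy
  obtain ⟨z, hz⟩ := hg k hk y hy
  refine ⟨-z, ?_⟩
  rw [smul_neg, ← hz, LinearEquiv.trans_apply, LinearEquiv.neg_apply]
  module

theorem exists_eq_smul_of_forall_dvd [IsDomain R] [B.IsPerfPair] {k : R} {x : M}
    (h : ∀ y, k ∣ B x y) : ∃ u, x = k • u := by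
  have hinj : Function.Injective B := (LinearMap.IsPerfPair.bijective_left B).injective
  choose f hf using h
  obtain rfl | hk := eq_or_ne k 0
  · exact ⟨0, hinj (LinearMap.ext fun y => by simp [hf y])⟩
  · let φ : Module.Dual R M :=
      { toFun := f
        map_add' := fun a b => mul_left_cancel₀ hk <| by
          rw [mul_add, ← hf, ← hf, ← hf, map_add]
        map_smul' := fun c a => mul_left_cancel₀ hk <| by
          rw [RingHom.id_apply, smul_eq_mul, mul_left_comm, ← hf, ← hf, map_smul, smul_eq_mul] }
    refine ⟨B.toPerfPair.symm φ, hinj (LinearMap.ext fun y => ?_)⟩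
    rw [map_smul, LinearMap.apply_symm_toPerfPair_self]
    exact hf y

variable {v w : M}

theorem sub_smul_mem_ker (hw : B v w = 1) (x : M) : x - B v x • w ∈ ker (B v) := by
  simp [hw]

theorem exists_eq_smul_add_smul [IsDomain R] [B.IsPerfPair] (hw : B v w = 1) {k : R} {y : M}
    (h : ∀ x ∈ ker (B v), k ∣ B y x) : ∃ u, y = k • u + B y w • v := by
  have hdvd (x : M) : k ∣ B (y - B y w • v) x := by
    have hproj : B (y - B y w • v) x = B y (x - B v x • w) := by
      simp [mul_comm]
    exact hproj ▸ h _ (sub_smul_mem_ker hw x)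
  obtain ⟨u, hu⟩ := exists_eq_smul_of_forall_dvd hdvd
  exact ⟨u, sub_eq_iff_eq_add.mp hu⟩

variable {g : ker (B v) ≃ₗ[R] ker (B v)} {G : M ≃ₗ[R] M}

theorem exists_apply_eq_smul_of_extends [IsDomain R] [B.IsPerfPair] (hw : B v w = 1)
    (hv : B v v ≠ 0) (hG : ∀ x y, B (G x) (G y) = B x y) (hGg : ∀ x : ker (B v), G x = g x) :
    ∃ ε : R, ε * ε = 1 ∧ G v = ε • v := by
  have horth : ∀ x ∈ ker (B v), 0 ∣ B (G v) x := by
    intro x hx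
    have hpre : G (g.symm ⟨x, hx⟩) = x := by rw [hGg, LinearEquiv.apply_symm_apply]
    rw [← hpre, hG, zero_dvd_iff]
    exact (g.symm ⟨x, hx⟩).2
  -- Orthogonality being divisibility by `0`, this shows that `(v^⊥)^⊥` is spanned by `v`.
  obtain ⟨u, hu⟩ := exists_eq_smul_add_smul hw horth
  rw [zero_smul, zero_add] at hu
  refine ⟨B (G v) w, mul_right_cancel₀ hv ?_, hu⟩
  have hnorm := hG v v
  rw [hu] at hnorm
  simpa [mul_assoc, hw] using hnorm

theorem actsOnDiscriminantBy_of_extends [IsDomain R] [B.IsPerfPair] (hw : B v w = 1)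
    (hG : ∀ x y, B (G x) (G y) = B x y) (hGg : ∀ x : ker (B v), G x = g x)
    {ε : R} (hε : ε * ε = 1) (hGv : G v = ε • v) : ActsOnDiscriminantBy B g ε := by
  intro k _ y hy
  obtain ⟨u, hu⟩ := exists_eq_smul_add_smul hw fun x hx => hy ⟨x, hx⟩
  have hmem : G u - ε • u ∈ ker (B v) := by
    have hpair : ε * B v (G u) = B v u := by simpa [hGv] using hG v u
    rw [LinearMap.mem_ker, map_sub, map_smul, smul_eq_mul, ← hpair, ← mul_assoc, hε, one_mul,
      sub_self]
  refine ⟨⟨G u - ε • u, hmem⟩, Subtype.ext ?_⟩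
  calc (g y : M) - ε • (y : M)
      = G (k • u + B y w • v) - ε • (k • u + B y w • v) := by rw [← hu, hGg]
    _ = k • (G u - ε • u) := by
        rw [map_add, map_smul, map_smul, hGv]
        module

/-- The splitting `M = Λ ⊕ R w` of the lattice by a vector `w` with `(v, w) = 1`, where
`Λ = v^⊥`. It allows isometries to be defined separately on `Λ` and on `w`. -/
def perpProdEquiv (hw : B v w = 1) : (ker (B v) × R) ≃ₗ[R] M where
  toFun p := p.1 + p.2 • w
  map_add' p q := by simp only [Prod.fst_add, Prod.snd_add, Submodule.coe_add]; module
  map_smul' c p := by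
    simp only [Prod.smul_fst, Prod.smul_snd, Submodule.coe_smul, RingHom.id_apply]; module
  invFun x := (⟨x - B v x • w, sub_smul_mem_ker hw x⟩, B v x)
  left_inv p := by ext <;> simp [hw]
  right_inv x := sub_add_cancel x _

theorem perpProdEquiv_apply (hw : B v w = 1) (p : ker (B v) × R) :
    perpProdEquiv hw p = p.1 + p.2 • w := rfl

theorem extendsToIsometry_of_pairing_eq {w' : M} (hB : B.IsSymm)
    (hg : ∀ x y : ker (B v), B (g x) (g y) = B x y) (hw : B v w = 1) (hw' : B v w' = 1)
    (hgw : ∀ x : ker (B v), B (g x) w' = B x w) (hww : B w' w' = B w w) :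
    ExtendsToIsometry B g := by
  let e := perpProdEquiv hw
  let e' := perpProdEquiv hw'
  let G := e.symm ≪≫ₗ g.prodCongr (LinearEquiv.refl R R) ≪≫ₗ e'
  have hGe (p : ker (B v) × R) : G (e p) = g p.1 + p.2 • w' := by
    simp [G, e', perpProdEquiv_apply]
  refine ⟨G, fun x y => ?_, fun x => ?_⟩
  · obtain ⟨p, rfl⟩ := e.surjective x
    obtain ⟨q, rfl⟩ := e.surjective y
    rw [hGe, hGe]
    simp [e, perpProdEquiv_apply, hg, hgw, hww, hB.eq w', hB.eq w]
  · have hx : e (x, 0) = x := by simp [e, perpProdEquiv_apply]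
    rw [← hx, hGe, zero_smul, add_zero]

theorem exists_pairing_eq_of_actsOnDiscriminantBy_one [IsDomain R] (hB : B.IsSymm)
    (hg : ∀ x y : ker (B v), B (g x) (g y) = B x y) (hw : B v w = 1) (hv : B v v ≠ 0)
    (hact : ActsOnDiscriminantBy B g 1) :
    ∃ w' : M, B v w' = 1 ∧ (∀ x : ker (B v), B (g x) w' = B x w) ∧ B w' w' = B w w := by
  set d := B v v with hd
  let p : ker (B v) := ⟨d • w - v, by simp [hw, hd]⟩
  have hvx (x : ker (B v)) : B x v = 0 := (hB.eq x v).trans x.2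
  obtain ⟨z, hz⟩ := hact d hv p fun x => ⟨B w x, by simp [p]⟩
  have hdw' : d • (w + z) = g p + v := by
    have hz' : (g p : M) - (d • w - v) = d • (z : M) := by simpa [p] using congr_arg Subtype.val hz
    rw [smul_add, ← hz']
    module
  have hvw' : B v (w + z) = 1 := by simp [hw]
  have hgw (x : ker (B v)) : B (g x) (w + z) = B x w := by
    apply mul_left_cancel₀ hv
    calc d * B (g x) (w + z) = B (g x) (g p + v) := by rw [← hdw', map_smul, smul_eq_mul]
      _ = B x p := by rw [map_add, hvx, add_zero, hg]
      _ = d * B x w := by simp [p, hvx]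
  refine ⟨w + z, hvw', hgw, mul_left_cancel₀ hv ?_⟩
  calc d * B (w + z) (w + z) = B (g p + v) (w + z) := by
        rw [← hdw', map_smul, LinearMap.smul_apply, smul_eq_mul]
    _ = B p w + 1 := by rw [map_add B, LinearMap.add_apply, hgw, hvw']
    _ = d * B w w := by simp [p, hw]

theorem extendsToIsometry_of_actsOnDiscriminantBy_one [IsDomain R] (hB : B.IsSymm)
    (hg : ∀ x y : ker (B v), B (g x) (g y) = B x y) (hw : B v w = 1) (hv : B v v ≠ 0)
    (hact : ActsOnDiscriminantBy B g 1) : ExtendsToIsometry B g := by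
  obtain ⟨w', hw', hgw, hww⟩ := exists_pairing_eq_of_actsOnDiscriminantBy_one hB hg hw hv hact
  exact extendsToIsometry_of_pairing_eq hB hg hw hw' hgw hww

theorem stmt10_general [IsDomain R] [B.IsPerfPair] (hB : B.IsSymm) {Λ : Submodule R M}
    (hΛ : Λ = ker (B v)) (hprim : ∃ w, B v w = 1) (hv : B v v ≠ 0) (g : Λ ≃ₗ[R] Λ)
    (hg : ∀ x y : Λ, B (g x) (g y) = B x y) :
    ExtendsToIsometry B g ↔ ∃ ε : R, (ε = 1 ∨ ε = -1) ∧ ActsOnDiscriminantBy B g ε := by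
  subst hΛ
  obtain ⟨w, hw⟩ := hprim
  constructor
  · rintro ⟨G, hG, hGg⟩
    obtain ⟨ε, hε, hGv⟩ := exists_apply_eq_smul_of_extends hw hv hG hGg
    exact ⟨ε, mul_self_eq_one_iff.mp hε, actsOnDiscriminantBy_of_extends hw hG hGg hε hGv⟩
  · rintro ⟨ε, rfl | rfl, hact⟩
    · exact extendsToIsometry_of_actsOnDiscriminantBy_one hB hg hw hv hact
    · have hneg : ExtendsToIsometry B (g ≪≫ₗ LinearEquiv.neg R) :=
        extendsToIsometry_of_actsOnDiscriminantBy_one hB (by simpa using hg) hw hv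
          (by simpa using hact.neg)
      convert hneg.neg using 1
      ext x
      simp

end UnimodularLattice

/-- The Mukai form as a bundled bilinear form, to which the results on unimodular lattices apply. -/
def mukaiBilin : BilinForm ℤ (Fin 8 → ℤ) :=
  LinearMap.mk₂ ℤ mukaiForm
    (fun x y z => by simp only [mukaiForm, Pi.add_apply]; ring)
    (fun c x y => by simp only [mukaiForm, Pi.smul_apply, smul_eq_mul]; ring)
    (fun x y z => by simp only [mukaiForm, Pi.add_apply]; ring)
    (fun c x y => by simp only [mukaiForm, Pi.smul_apply, smul_eq_mul]; ring)

theorem mukaiBilin_apply (x y : Fin 8 → ℤ) : mukaiBilin x y = mukaiForm x y := rfl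

theorem mukaiBilin_isSymm : mukaiBilin.IsSymm where
  eq x y := by simp only [mukaiBilin_apply, mukaiForm]; ring

theorem perpV_eq_ker (v : Fin 8 → ℤ) : perpV v = ker (mukaiBilin v) := by
  ext x
  rw [LinearMap.mem_ker, mukaiBilin_isSymm.eq]
  rfl

/-- The permutation of the standard basis of `U^{⊕4}` exchanging the two isotropic generators of
each hyperbolic plane; it turns the Mukai form into the dot product. -/
def hyperbolicSwap : Equiv.Perm (Fin 8) :=
  Function.Involutive.toPerm ![1, 0, 3, 2, 5, 4, 7, 6] (by unfold Function.Involutive; decide)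

theorem mukaiForm_eq_dotProduct (x y : Fin 8 → ℤ) :
    mukaiForm x y = (x ∘ hyperbolicSwap) ⬝ᵥ y := by
  simp only [mukaiForm, dotProduct, hyperbolicSwap, Function.Involutive.coe_toPerm,
    Function.comp_apply, Fin.sum_univ_eight, Matrix.cons_val_zero, Matrix.cons_val_one,
    Matrix.cons_val]
  ring

instance mukaiBilin_isPerfPair : mukaiBilin.IsPerfPair := by
  let e := LinearEquiv.funCongrLeft ℤ ℤ hyperbolicSwap ≪≫ₗ dotProductEquiv ℤ (Fin 8)
  have he : mukaiBilin = e.toLinearMap := LinearMap.ext₂ mukaiForm_eq_dotProduct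
  exact he ▸ inferInstance

theorem IsPrimitive.exists_mukaiBilin_eq_one {v : Fin 8 → ℤ} (hv : IsPrimitive v) :
    ∃ w, mukaiBilin v w = 1 := by
  obtain ⟨f, hf⟩ := Finset.univ.gcd_eq_sum_mul v
  refine ⟨f ∘ hyperbolicSwap, ?_⟩
  rw [mukaiBilin_apply, mukaiForm_eq_dotProduct, comp_equiv_dotProduct_comp_equiv]
  exact hf.symm.trans hv

theorem intCast_mukaiForm (x y : Fin 8 → ℤ) :
    (mukaiForm x y : ℚ) = mukaiFormQ (fun i => x i) (fun i => y i) := by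
  simp [mukaiForm, mukaiFormQ]

theorem mukaiFormQ_zsmul_left (k : ℤ) (x y : Fin 8 → ℚ) :
    mukaiFormQ (k • x) y = k * mukaiFormQ x y := by
  simp only [mukaiFormQ, Pi.smul_apply, zsmul_eq_mul]
  ring

theorem mukaiFormQ_eq_intCast_iff {k : ℤ} (hk : k ≠ 0) {x : Fin 8 → ℚ} {y : Fin 8 → ℤ}
    (hyx : (fun i => (y i : ℚ)) = k • x) (u : Fin 8 → ℤ) (m : ℤ) :
    mukaiFormQ x (fun i => (u i : ℚ)) = m ↔ mukaiForm y u = k * m := by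
  rw [← Int.cast_inj (α := ℚ), intCast_mukaiForm, hyx, mukaiFormQ_zsmul_left, Int.cast_mul,
    mul_right_inj' (Int.cast_ne_zero.mpr hk)]

theorem actsOnDiscriminantBy_mukaiBilin_iff {v : Fin 8 → ℤ} (g : perpV v ≃ₗ[ℤ] perpV v) (ε : ℤ) :
    ActsOnDiscriminantBy mukaiBilin g ε ↔
      ∀ x : Fin 8 → ℚ,
        mukaiFormQ x (fun i => (v i : ℚ)) = 0 →
        (∀ y ∈ perpV v, ∃ m : ℤ, mukaiFormQ x (fun i => (y i : ℚ)) = (m : ℚ)) →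
        ∀ (k : ℤ) (y : Fin 8 → ℤ) (hy : y ∈ perpV v),
          (fun i => ((y i : ℚ))) = k • x →
          ∃ z ∈ perpV v, (g ⟨y, hy⟩).1 - ε • y = k • z := by
  constructor
  · intro hact x _ hdual k y hy hyx
    obtain rfl | hk := eq_or_ne k 0
    · obtain rfl : y = 0 := funext fun i => by simpa using congr_fun hyx i
      exact ⟨0, zero_mem _, by simp⟩
    · obtain ⟨z, hz⟩ := hact k hk ⟨y, hy⟩ fun u =>
        (hdual u u.2).imp fun m => (mukaiFormQ_eq_intCast_iff hk hyx u m).mp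
      exact ⟨z, z.2, congr_arg Subtype.val hz⟩
  · intro hact k hk y hdvd
    have hyx : (fun i => (y.1 i : ℚ)) = k • fun i => (y.1 i : ℚ) / k := by
      ext i
      simp [mul_div_cancel₀, hk]
    have horth := (mukaiFormQ_eq_intCast_iff hk hyx v 0).mpr (y.2.trans (mul_zero k).symm)
    obtain ⟨z, hz, hgz⟩ := hact _ (horth.trans Int.cast_zero)
      (fun u hu => (hdvd ⟨u, hu⟩).imp fun m => (mukaiFormQ_eq_intCast_iff hk hyx u m).mpr)
      k y y.2 hyx
    exact ⟨⟨z, hz⟩, Subtype.ext hgz⟩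

/-- Let `v` be primitive in the Mukai lattice with `(v,v) = 2n+2`, `Λ = v^⊥`, and
`g` an isometry of `Λ`. Then `g` extends to an isometry of the Mukai lattice if
and only if `g` acts as `+1` or `-1` on the discriminant group `Λ^∨/Λ`, i.e.
there is `ε ∈ {1,-1}` with `g_ℚ(x) - ε·x ∈ Λ` for every `x` in the dual lattice
`Λ^∨ ⊆ Λ ⊗ ℚ`.  Here the dual lattice is realized inside `v^⊥ ⊆ ℚ⁸` as the set
of `x` pairing integrally with `Λ`, and the condition `g_ℚ(x) - ε·x ∈ Λ` is
expressed by clearing denominators: whenever `k • x` equals an integral vector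
`y ∈ Λ`, one has `g(y) - ε·y ∈ k • Λ`. -/
theorem stmt10 (n : ℕ) (hn : 1 ≤ n) (v : Fin 8 → ℤ)
    (hvprim : IsPrimitive v) (hvv : mukaiForm v v = 2 * (n : ℤ) + 2)
    (g : perpV v ≃ₗ[ℤ] perpV v)
    (hg : ∀ x y : perpV v, mukaiForm (g x).1 (g y).1 = mukaiForm x.1 y.1) :
    (∃ gt : (Fin 8 → ℤ) ≃ₗ[ℤ] (Fin 8 → ℤ),
        (∀ x y, mukaiForm (gt x) (gt y) = mukaiForm x y) ∧
        ∀ x : perpV v, gt x.1 = (g x).1) ↔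
      (∃ ε : ℤ, (ε = 1 ∨ ε = -1) ∧
        ∀ x : Fin 8 → ℚ,
          mukaiFormQ x (fun i => (v i : ℚ)) = 0 →
          (∀ y ∈ perpV v, ∃ m : ℤ, mukaiFormQ x (fun i => (y i : ℚ)) = (m : ℚ)) →
          ∀ (k : ℤ) (y : Fin 8 → ℤ) (hy : y ∈ perpV v),
            (fun i => ((y i : ℚ))) = k • x →
            ∃ z ∈ perpV v, (g ⟨y, hy⟩).1 - ε • y = k • z) := by
  have hv : mukaiBilin v v ≠ 0 := by rw [mukaiBilin_apply]; omega
  exact (stmt10_general mukaiBilin_isSymm (perpV_eq_ker v) hvprim.exists_mukaiBilin_eq_one hv g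
    hg).trans (exists_congr fun ε => and_congr_right' (actsOnDiscriminantBy_mukaiBilin_iff g ε))
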